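/- Let k ≥ 1, let j : Fin k → Fin m be injective, i : Fin k → Fin n, let p₀ : Fin m lie outside the range of j, and let q : Fin n; write J for the event ⋂_{t : Fin k} {Yp (j t) = i t}. Suppose real numbers are given such that for each t : Fin k, L t ≤ P(⋂_{s ≠ t} {Yp (j s) = i s}) ≤ U t and K t ≤ P(Yp (j t) = i t ∧ X = p₀ ∧ Y = q) ≤ M t. Then max{ 0, (Σ_t P(Yp (j t) = i t)) + P(X = p₀ ∧ Y = q) − k, max_t (L t + K t − 1) } ≤ P(J ∧ X = p₀ ∧ Y = q) ≤ min{ min_t P(Yp (j t) = i t), P(X = p₀ ∧ Y = q), min_t U t, min_t M t }. (This is Theorem 8 of the paper, bounding P(y_{i_1}_{x_{j_1}}, …, y_{i_k}_{x_{j_k}}, x_p, y_q).) -/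

import Mathlib

open MeasureTheory

/-- Real-valued probability of an event. -/
noncomputable def pr {Ω : Type*} [MeasurableSpace Ω] (P : Measure Ω) (A : Set Ω) : ℝ :=
  (P A).toReal

theorem pr_mono' {Ω : Type*} [MeasurableSpace Ω] (P : Measure Ω) [IsProbabilityMeasure P]
    {A B : Set Ω} (h : A ⊆ B) : pr P A ≤ pr P B :=
  ENNReal.toReal_mono (measure_ne_top P B) (measure_mono h)

theorem pr_inter_ge {Ω : Type*} [MeasurableSpace Ω] (P : Measure Ω) [IsProbabilityMeasure P]
    {A B : Set Ω} (hB : MeasurableSet B) : pr P A + pr P B - 1 ≤ pr P (A ∩ B) := by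
  have h1 := measureReal_union_add_inter (μ := P) (s := A) hB
  have h2 : P.real (A ∪ B) ≤ 1 := measureReal_le_one
  change P.real A + P.real B - 1 ≤ P.real (A ∩ B)
  linarith

theorem pr_frechet {Ω ι : Type*} [MeasurableSpace Ω] (P : Measure Ω) [IsProbabilityMeasure P]
    (A : ι → Set Ω) (hA : ∀ t, MeasurableSet (A t)) (B : Set Ω) (S : Finset ι) :
    (∑ t ∈ S, pr P (A t)) + pr P B - (S.card : ℝ) ≤ pr P {ω | (∀ t ∈ S, ω ∈ A t) ∧ ω ∈ B} := by
  classical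
  induction S using Finset.induction_on with
  | empty => simp
  | insert a S ha ih =>
    have h := pr_inter_ge P (A := {ω | (∀ t ∈ S, ω ∈ A t) ∧ ω ∈ B}) (hA a)
    have h2 := pr_mono' P (A := {ω | (∀ t ∈ S, ω ∈ A t) ∧ ω ∈ B} ∩ A a)
      (B := {ω | (∀ t ∈ insert a S, ω ∈ A t) ∧ ω ∈ B}) (by
        rintro ω ⟨⟨h1, h2⟩, h3⟩
        refine ⟨fun t ht => ?_, h2⟩
        rcases Finset.mem_insert.1 ht with rfl | ht
        · exact h3
        · exact h1 t ht)
    rw [Finset.sum_insert ha, Finset.card_insert_of_notMem ha]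
    push_cast
    linarith

/-- Theorem 8: bounds for `P(y_{i_1}_{x_{j_1}}, …, y_{i_k}_{x_{j_k}}, x_p, y_q)`. -/
theorem bounds_multi_xp_yq
    {Ω : Type*} [MeasurableSpace Ω] (P : Measure Ω) [IsProbabilityMeasure P]
    {m n : ℕ} (hm : 0 < m) (hn : 0 < n)
    (X : Ω → Fin m) (Y : Ω → Fin n) (Yp : Fin m → Ω → Fin n)
    (hX : Measurable X) (hY : Measurable Y) (hYp : ∀ j, Measurable (Yp j))
    (hconsist : ∀ ω, Y ω = Yp (X ω) ω)
    {k : ℕ} (hk : 1 ≤ k) (j : Fin k → Fin m) (hj : Function.Injective j)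
    (i : Fin k → Fin n) (p₀ : Fin m) (hp₀ : p₀ ∉ Set.range j) (q : Fin n)
    (L U K M : Fin k → ℝ)
    (hL : ∀ t, L t ≤ pr P {ω | ∀ s, s ≠ t → Yp (j s) ω = i s})
    (hU : ∀ t, pr P {ω | ∀ s, s ≠ t → Yp (j s) ω = i s} ≤ U t)
    (hK : ∀ t, K t ≤ pr P {ω | Yp (j t) ω = i t ∧ X ω = p₀ ∧ Y ω = q})
    (hM : ∀ t, pr P {ω | Yp (j t) ω = i t ∧ X ω = p₀ ∧ Y ω = q} ≤ M t) :
    max (max 0 ((∑ t, pr P {ω | Yp (j t) ω = i t})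
                  + pr P {ω | X ω = p₀ ∧ Y ω = q} - (k : ℝ)))
        (⨆ t, (L t + K t - 1))
      ≤ pr P {ω | (∀ t, Yp (j t) ω = i t) ∧ X ω = p₀ ∧ Y ω = q} ∧
    pr P {ω | (∀ t, Yp (j t) ω = i t) ∧ X ω = p₀ ∧ Y ω = q}
      ≤ min (min (⨅ t, pr P {ω | Yp (j t) ω = i t}) (pr P {ω | X ω = p₀ ∧ Y ω = q}))
            (min (⨅ t, U t) (⨅ t, M t)) := by
  have : Nonempty (Fin k) := ⟨⟨0, hk⟩⟩
  have hA : ∀ t, MeasurableSet {ω | Yp (j t) ω = i t} := fun t =>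
    hYp (j t) (measurableSet_singleton (i t))
  have hB : MeasurableSet {ω | X ω = p₀ ∧ Y ω = q} :=
    (hX (measurableSet_singleton p₀)).inter (hY (measurableSet_singleton q))
  refine ⟨max_le (max_le ENNReal.toReal_nonneg ?_) (ciSup_le fun t => ?_),
    le_min (le_min (le_ciInf fun t => ?_) ?_) (le_min (le_ciInf fun t => ?_) (le_ciInf fun t => ?_))⟩
  · have h := pr_frechet P (fun t => {ω | Yp (j t) ω = i t}) hA {ω | X ω = p₀ ∧ Y ω = q} Finset.univ
    simpa using h
  · have h := pr_inter_ge P (A := {ω | ∀ s, s ≠ t → Yp (j s) ω = i s}) ((hA t).inter hB)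
    have h2 := pr_mono' P (A := {ω | ∀ s, s ≠ t → Yp (j s) ω = i s} ∩
        ({ω | Yp (j t) ω = i t} ∩ {ω | X ω = p₀ ∧ Y ω = q}))
      (B := {ω | (∀ t, Yp (j t) ω = i t) ∧ X ω = p₀ ∧ Y ω = q}) (by
        rintro ω ⟨h1, h2, h3⟩
        refine ⟨fun s => ?_, h3⟩
        by_cases hs : s = t
        · subst hs; exact h2
        · exact h1 s hs)
    have h3 : K t ≤ pr P ({ω | Yp (j t) ω = i t} ∩ {ω | X ω = p₀ ∧ Y ω = q}) := hK t
    linarith [hL t]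
  · exact pr_mono' P fun ω h => h.1 t
  · exact pr_mono' P fun ω h => h.2
  · refine le_trans ?_ (hU t)
    exact pr_mono' P (fun ω h s _ => h.1 s)
  · refine le_trans ?_ (hM t)
    exact pr_mono' P (fun ω h => ⟨h.1 t, h.2⟩)
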